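/- arXiv:2310.00376 — 2 statements merged into one kernel-verified Lean document; each statement's English description precedes it below -/
import Mathlib

section
/- (Convergence of the partial proximal point method, Theorem 4.1.) Assume the PPPM setting. Suppose the proximal parameters satisfy σ_k ≥ 0 and σ_k ≤ σ_{k−1} for all k, and the error terms satisfy Σ_{k=1}^∞ (1+‖y_k‖)‖ε_k¹‖ < ∞, Σ_{k=1}^∞ (1+‖z_k‖)‖ε_k²‖ < ∞, and Σ_{k=1}^∞ (1+‖λ_k‖)‖ε_k³‖ < ∞. Then, as k → ∞: the distance from 0 to the set {ξ + Bᵀλ_k : ξ a subgradient of f at y_k} tends to 0; the distance from 0 to the set {ζ + Cᵀλ_k : ζ a subgradient of g at z_k} tends to 0; ‖By_k + Cz_k − b‖ → 0; and |F(x_k) − F(x*)| → 0, where x_k = (y_k, z_k) and x* = (y*, z*). -/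
/-!
The proof is a Fejér-type energy argument. Write `dₖ = zₖ - zₖ₋₁`. Monotonicity of the
subdifferentials, applied to the inexact KKT conditions at step `k` and to the exact ones at the KKT
solution, gives `σₖ ⟪dₖ, zₖ - z*⟫ ≤ δₖ`, where
`δₖ = |⟪ε¹ₖ, yₖ - y*⟫| + |⟪ε²ₖ, zₖ - z*⟫| + |⟪ε³ₖ, λₖ - λ*⟫|` is summable by Cauchy–Schwarz. Since
`2⟪dₖ, zₖ - z*⟫ = ‖zₖ - z*‖² + ‖dₖ‖² - ‖zₖ₋₁ - z*‖²` and `σ` is nonincreasing, the energy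
`σₖ‖zₖ - z*‖²` satisfies a perturbed descent inequality (`descent_of_step`), so it is bounded and
`∑ σₖ‖dₖ‖²` converges (`bounded_summable_of_descent`). Hence both `σₖ dₖ` and `σₖ⟪dₖ, zₖ - z*⟫` tend
to zero. The first, with `εⁱₖ → 0`, gives the stationarity and feasibility limits. The second
controls the upper bound for `F(xₖ) - F(x*)` coming from the subgradients at step `k`, while the KKT
conditions supply the lower bound `-⟪λ*, ε³ₖ⟫`.
-/

open Matrix Filter

/-- Euclidean norm of a vector in `ℝ^n`. -/
noncomputable def vnorm {n : ℕ} (w : Fin n → ℝ) : ℝ := Real.sqrt (w ⬝ᵥ w)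

/-- `ξ` is a subgradient of the convex function `h` at `u`. -/
def IsSubgradient {p : ℕ} (h : (Fin p → ℝ) → ℝ) (ξ u : Fin p → ℝ) : Prop :=
  ∀ w, h w ≥ h u + ξ ⬝ᵥ (w - u)

lemma vnorm_eq {n : ℕ} (w : Fin n → ℝ) : vnorm w = ‖WithLp.toLp 2 w‖ := by
  rw [vnorm, EuclideanSpace.norm_eq]
  congr 1
  simp [dotProduct, sq]

lemma vnorm_nonneg {n : ℕ} (w : Fin n → ℝ) : 0 ≤ vnorm w := Real.sqrt_nonneg _

lemma dotProduct_self_nonneg' {n : ℕ} (w : Fin n → ℝ) : 0 ≤ w ⬝ᵥ w :=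
  Finset.sum_nonneg fun i _ => mul_self_nonneg (w i)

lemma vnorm_sq {n : ℕ} (w : Fin n → ℝ) : vnorm w ^ 2 = w ⬝ᵥ w :=
  Real.sq_sqrt (dotProduct_self_nonneg' w)

lemma vnorm_sub_le {n : ℕ} (u v : Fin n → ℝ) : vnorm (u - v) ≤ vnorm u + vnorm v := by
  simp only [vnorm_eq, WithLp.toLp_sub]
  exact norm_sub_le _ _

lemma abs_dotProduct_le {n : ℕ} (u v : Fin n → ℝ) : |u ⬝ᵥ v| ≤ vnorm u * vnorm v := by
  have h := abs_real_inner_le_norm (WithLp.toLp 2 v) (WithLp.toLp 2 u)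
  rw [EuclideanSpace.inner_toLp_toLp] at h
  simpa [vnorm_eq, mul_comm] using h

lemma transpose_mulVec_dotProduct {m n : ℕ} (A : Matrix (Fin m) (Fin n) ℝ)
    (l : Fin m → ℝ) (v : Fin n → ℝ) : (Aᵀ *ᵥ l) ⬝ᵥ v = l ⬝ᵥ (A *ᵥ v) := by
  rw [Matrix.mulVec_transpose, Matrix.dotProduct_mulVec]

lemma summable_abs_dotProduct {n : ℕ} {u e : ℕ → Fin n → ℝ}
    (h : Summable fun k => (1 + vnorm (u k)) * vnorm (e k)) (w : Fin n → ℝ) :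
    Summable fun k => |e k ⬝ᵥ (u k - w)| := by
  refine Summable.of_nonneg_of_le (fun k => abs_nonneg _) (fun k => ?_) (h.mul_left (1 + vnorm w))
  have h1 := abs_dotProduct_le (e k) (u k - w)
  have h2 := mul_le_mul_of_nonneg_left (vnorm_sub_le (u k) w) (vnorm_nonneg (e k))
  have h3 := mul_nonneg (vnorm_nonneg (e k)) (vnorm_nonneg (u k))
  have h4 := mul_nonneg h3 (vnorm_nonneg w)
  have h5 := vnorm_nonneg (e k)
  nlinarith

lemma tendsto_vnorm_error {n : ℕ} {u e : ℕ → Fin n → ℝ}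
    (h : Summable fun k => (1 + vnorm (u k)) * vnorm (e k)) :
    Tendsto (fun k => vnorm (e k)) atTop (nhds 0) := by
  refine squeeze_zero (fun k => vnorm_nonneg _) (fun k => ?_) h.tendsto_atTop_zero
  nlinarith [mul_nonneg (vnorm_nonneg (u k)) (vnorm_nonneg (e k))]

/-- A nonnegative energy `s` that decreases by `t k ≥ 0` up to a summable error is bounded, and the
decrements are summable. -/
lemma bounded_summable_of_descent {s t e : ℕ → ℝ} (hs : ∀ k, 0 ≤ s k) (ht : ∀ k, 0 ≤ t k)
    (he : ∀ k, 0 ≤ e k) (hsum : Summable e) (h : ∀ k, s (k + 1) + t k ≤ s k + e k) :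
    (∃ M, ∀ k, s k ≤ M) ∧ Summable t := by
  have key : ∀ n, s n + ∑ i ∈ Finset.range n, t i ≤ s 0 + ∑ i ∈ Finset.range n, e i := by
    intro n
    induction n with
    | zero => simp
    | succ n ih =>
      rw [Finset.sum_range_succ, Finset.sum_range_succ]
      linarith [h n]
  have hb : ∀ n, ∑ i ∈ Finset.range n, e i ≤ ∑' i, e i := fun n =>
    hsum.sum_le_tsum _ fun i _ => he i
  refine ⟨⟨s 0 + ∑' i, e i, fun k => ?_⟩,
    summable_of_sum_range_le (c := s 0 + ∑' i, e i) ht fun n => ?_⟩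
  · linarith [key k, hb k, Finset.sum_nonneg fun i (_ : i ∈ Finset.range k) => ht i]
  · linarith [key n, hb n, hs n]

/-- The one-step energy inequality: `2⟪u - v, u - w⟫ = ‖u - w‖² + ‖u - v‖² - ‖v - w‖²`, weighted by
the proximal parameters `a ≤ a'` of two consecutive steps. -/
lemma descent_of_step {n : ℕ} {u v w : Fin n → ℝ} {a a' d : ℝ} (haa : a ≤ a')
    (h : a * ((u - v) ⬝ᵥ (u - w)) ≤ d) :
    a * ((u - w) ⬝ᵥ (u - w)) + a * ((u - v) ⬝ᵥ (u - v)) ≤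
      a' * ((v - w) ⬝ᵥ (v - w)) + 2 * d := by
  have hid : 2 * ((u - v) ⬝ᵥ (u - w)) =
      (u - w) ⬝ᵥ (u - w) + (u - v) ⬝ᵥ (u - v) - (v - w) ⬝ᵥ (v - w) := by
    simp only [sub_dotProduct, dotProduct_sub]
    rw [dotProduct_comm v u, dotProduct_comm w u, dotProduct_comm w v]
    ring
  have hmono := mul_le_mul_of_nonneg_right haa (dotProduct_self_nonneg' (v - w))
  linear_combination 2 * h + hmono - a * hid

/-- The distance from `0` to the shifted subdifferential tends to zero as soon as some selection of
subgradients makes the shifted vectors tend to zero. -/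
lemma tendsto_sInf_subgradient {p : ℕ} {h : (Fin p → ℝ) → ℝ} {u c r : ℕ → Fin p → ℝ}
    (hsub : ∀ k, 1 ≤ k → IsSubgradient h (r k - c k) (u k))
    (hr : Tendsto (fun k => vnorm (r k)) atTop (nhds 0)) :
    Tendsto (fun k => sInf {x : ℝ | ∃ ξ, IsSubgradient h ξ (u k) ∧ x = vnorm (ξ + c k)})
      atTop (nhds 0) := by
  refine squeeze_zero' (Eventually.of_forall fun k => Real.sInf_nonneg ?_) ?_ hr
  · rintro x ⟨ξ, -, rfl⟩
    exact vnorm_nonneg _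
  · filter_upwards [eventually_ge_atTop 1] with k hk
    refine csInf_le ⟨0, ?_⟩ ⟨_, hsub k hk, by rw [sub_add_cancel]⟩
    rintro x ⟨ξ, -, rfl⟩
    exact vnorm_nonneg _

/-- Theorem 4.1 (convergence of the partial proximal point method with
inexactly solved subproblems). -/
theorem pppm_convergence
    {m n₁ n₂ : ℕ}
    (B : Matrix (Fin m) (Fin n₁) ℝ) (C : Matrix (Fin m) (Fin n₂) ℝ) (b : Fin m → ℝ)
    (f : (Fin n₁ → ℝ) → ℝ) (g : (Fin n₂ → ℝ) → ℝ)
    (hf : ConvexOn ℝ Set.univ f) (hg : ConvexOn ℝ Set.univ g)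
    -- a KKT solution of problem (P)
    (ystar : Fin n₁ → ℝ) (zstar : Fin n₂ → ℝ) (lamstar : Fin m → ℝ)
    (hKKT₁ : IsSubgradient f (-(Bᵀ *ᵥ lamstar)) ystar)
    (hKKT₂ : IsSubgradient g (-(Cᵀ *ᵥ lamstar)) zstar)
    (hKKT₃ : B *ᵥ ystar + C *ᵥ zstar = b)
    -- PPPM iterates, proximal parameters and error terms
    (yseq : ℕ → Fin n₁ → ℝ) (zseq : ℕ → Fin n₂ → ℝ) (lamseq : ℕ → Fin m → ℝ)
    (σ : ℕ → ℝ)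
    (eps1 : ℕ → Fin n₁ → ℝ) (eps2 : ℕ → Fin n₂ → ℝ) (eps3 : ℕ → Fin m → ℝ)
    (hσ0 : ∀ k, 0 ≤ σ k) (hσmono : ∀ k, σ (k + 1) ≤ σ k)
    (hikkt₁ : ∀ k, 1 ≤ k →
      IsSubgradient f (eps1 k - Bᵀ *ᵥ lamseq k) (yseq k))
    (hikkt₂ : ∀ k, 1 ≤ k →
      IsSubgradient g (eps2 k - Cᵀ *ᵥ lamseq k - σ k • (zseq k - zseq (k - 1))) (zseq k))
    (hikkt₃ : ∀ k, 1 ≤ k → B *ᵥ yseq k + C *ᵥ zseq k - b = eps3 k)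
    -- summability of the weighted error terms
    (hsum₁ : Summable (fun k => (1 + vnorm (yseq k)) * vnorm (eps1 k)))
    (hsum₂ : Summable (fun k => (1 + vnorm (zseq k)) * vnorm (eps2 k)))
    (hsum₃ : Summable (fun k => (1 + vnorm (lamseq k)) * vnorm (eps3 k))) :
    Tendsto (fun k => sInf {r : ℝ | ∃ ξ, IsSubgradient f ξ (yseq k) ∧
        r = vnorm (ξ + Bᵀ *ᵥ lamseq k)}) atTop (nhds 0) ∧
    Tendsto (fun k => sInf {r : ℝ | ∃ ζ, IsSubgradient g ζ (zseq k) ∧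
        r = vnorm (ζ + Cᵀ *ᵥ lamseq k)}) atTop (nhds 0) ∧
    Tendsto (fun k => vnorm (B *ᵥ yseq k + C *ᵥ zseq k - b)) atTop (nhds 0) ∧
    Tendsto (fun k => |(f (yseq k) + g (zseq k)) - (f ystar + g zstar)|) atTop (nhds 0) := by
  have hfeas : ∀ k, 1 ≤ k → eps3 k = B *ᵥ (yseq k - ystar) + C *ᵥ (zseq k - zstar) := by
    intro k hk
    rw [← hikkt₃ k hk, ← hKKT₃, Matrix.mulVec_sub, Matrix.mulVec_sub]
    abel
  have S1 := summable_abs_dotProduct hsum₁ ystar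
  have S2 := summable_abs_dotProduct hsum₂ zstar
  have S3 := summable_abs_dotProduct hsum₃ lamstar
  have S3' := summable_abs_dotProduct hsum₃ 0
  have E1 := tendsto_vnorm_error hsum₁
  have E2 := tendsto_vnorm_error hsum₂
  have E3 := tendsto_vnorm_error hsum₃
  have upper : ∀ k, 1 ≤ k → (f (yseq k) + g (zseq k)) - (f ystar + g zstar) ≤
      eps1 k ⬝ᵥ (yseq k - ystar) + eps2 k ⬝ᵥ (zseq k - zstar) - eps3 k ⬝ᵥ lamseq k
        - σ k * ((zseq k - zseq (k - 1)) ⬝ᵥ (zseq k - zstar)) := by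
    intro k hk
    have h1 := hikkt₁ k hk ystar
    have h2 := hikkt₂ k hk zstar
    rw [← neg_sub (yseq k), dotProduct_neg, sub_dotProduct, transpose_mulVec_dotProduct] at h1
    rw [← neg_sub (zseq k) zstar, dotProduct_neg, sub_dotProduct, sub_dotProduct,
      transpose_mulVec_dotProduct, smul_dotProduct, smul_eq_mul] at h2
    have h3 : eps3 k ⬝ᵥ lamseq k = lamseq k ⬝ᵥ (B *ᵥ (yseq k - ystar))
        + lamseq k ⬝ᵥ (C *ᵥ (zseq k - zstar)) := by
      rw [dotProduct_comm, hfeas k hk, dotProduct_add]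
    linarith
  have lower : ∀ k, 1 ≤ k →
      -(eps3 k ⬝ᵥ lamstar) ≤ (f (yseq k) + g (zseq k)) - (f ystar + g zstar) := by
    intro k hk
    have h1 := hKKT₁ (yseq k)
    have h2 := hKKT₂ (zseq k)
    rw [neg_dotProduct, transpose_mulVec_dotProduct] at h1 h2
    have h3 : eps3 k ⬝ᵥ lamstar = lamstar ⬝ᵥ (B *ᵥ (yseq k - ystar))
        + lamstar ⬝ᵥ (C *ᵥ (zseq k - zstar)) := by
      rw [dotProduct_comm, hfeas k hk, dotProduct_add]
    linarith
  set δ : ℕ → ℝ := fun k => |eps1 k ⬝ᵥ (yseq k - ystar)| + |eps2 k ⬝ᵥ (zseq k - zstar)|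
    + |eps3 k ⬝ᵥ (lamseq k - lamstar)| with hδ
  have Sδ : Summable δ := (S1.add S2).add S3
  have hδ0 : ∀ k, 0 ≤ δ k := fun k => by positivity
  have step : ∀ k, 1 ≤ k → σ k * ((zseq k - zseq (k - 1)) ⬝ᵥ (zseq k - zstar)) ≤ δ k := by
    intro k hk
    have h1 := upper k hk
    have h2 := lower k hk
    have h3 : eps3 k ⬝ᵥ (lamseq k - lamstar) = eps3 k ⬝ᵥ lamseq k - eps3 k ⬝ᵥ lamstar :=
      dotProduct_sub _ _ _
    simp only [hδ]
    linarith [le_abs_self (eps1 k ⬝ᵥ (yseq k - ystar)), le_abs_self (eps2 k ⬝ᵥ (zseq k - zstar)),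
      neg_abs_le (eps3 k ⬝ᵥ (lamseq k - lamstar))]
  obtain ⟨⟨M, hM⟩, St⟩ := bounded_summable_of_descent
    (s := fun k => σ k * ((zseq k - zstar) ⬝ᵥ (zseq k - zstar)))
    (t := fun k => σ (k + 1) * ((zseq (k + 1) - zseq k) ⬝ᵥ (zseq (k + 1) - zseq k)))
    (e := fun k => 2 * δ (k + 1))
    (fun k => mul_nonneg (hσ0 k) (dotProduct_self_nonneg' _))
    (fun k => mul_nonneg (hσ0 _) (dotProduct_self_nonneg' _))
    (fun k => mul_nonneg zero_le_two (hδ0 _))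
    (((summable_nat_add_iff 1).2 Sδ).mul_left 2)
    (fun k => descent_of_step (hσmono k) (step (k + 1) (Nat.succ_pos k)))
  have T : Tendsto (fun k => σ k * ((zseq k - zseq (k - 1)) ⬝ᵥ (zseq k - zseq (k - 1))))
      atTop (nhds 0) := (tendsto_add_atTop_iff_nat 1).1 St.tendsto_atTop_zero
  have hσle : ∀ k, σ k ≤ σ 0 := fun k => antitone_nat_of_succ_le hσmono (Nat.zero_le k)
  have Tσd : Tendsto (fun k => σ k * vnorm (zseq k - zseq (k - 1))) atTop (nhds 0) := by
    -- `(σₖ‖dₖ‖)² ≤ σ₀ · σₖ‖dₖ‖²`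
    have hlim := (T.const_mul (σ 0)).sqrt
    rw [mul_zero, Real.sqrt_zero] at hlim
    refine squeeze_zero (fun k => mul_nonneg (hσ0 k) (vnorm_nonneg _)) (fun k => ?_) hlim
    refine Real.le_sqrt_of_sq_le ?_
    rw [mul_pow, vnorm_sq, sq, mul_assoc]
    exact mul_le_mul_of_nonneg_right (hσle k)
      (mul_nonneg (hσ0 k) (dotProduct_self_nonneg' _))
  have Tcross : Tendsto (fun k => |σ k * ((zseq k - zseq (k - 1)) ⬝ᵥ (zseq k - zstar))|)
      atTop (nhds 0) := by
    -- `(σₖ⟪dₖ, zₖ - z*⟫)² ≤ (σₖ‖zₖ - z*‖²) · (σₖ‖dₖ‖²) ≤ M · σₖ‖dₖ‖²`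
    have hlim := (T.const_mul M).sqrt
    rw [mul_zero, Real.sqrt_zero] at hlim
    refine squeeze_zero (fun k => abs_nonneg _) (fun k => ?_) hlim
    refine Real.le_sqrt_of_sq_le ?_
    have h1 := abs_dotProduct_le (zseq k - zseq (k - 1)) (zseq k - zstar)
    have h2 := pow_le_pow_left₀ (abs_nonneg _) h1 2
    rw [mul_pow, vnorm_sq, vnorm_sq] at h2
    have h3 := mul_le_mul_of_nonneg_left h2 (sq_nonneg (σ k))
    have h4 := mul_le_mul_of_nonneg_right (hM k)
      (mul_nonneg (hσ0 k) (dotProduct_self_nonneg' (zseq k - zseq (k - 1))))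
    rw [abs_mul, mul_pow, sq_abs (σ k)]
    linarith
  refine ⟨tendsto_sInf_subgradient hikkt₁ E1, ?_, ?_, ?_⟩
  · refine tendsto_sInf_subgradient
      (r := fun k => eps2 k - σ k • (zseq k - zseq (k - 1))) (fun k hk => ?_) ?_
    · have h := hikkt₂ k hk
      rwa [sub_right_comm] at h
    · have hlim := E2.add Tσd
      rw [add_zero] at hlim
      refine squeeze_zero (fun k => vnorm_nonneg _) (fun k => ?_) hlim
      refine (vnorm_sub_le _ _).trans (le_of_eq ?_)
      rw [vnorm_eq (σ k • _), WithLp.toLp_smul, norm_smul, Real.norm_of_nonneg (hσ0 k), ← vnorm_eq]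
  · refine E3.congr' ?_
    filter_upwards [eventually_ge_atTop 1] with k hk
    rw [hikkt₃ k hk]
  · have hlim := (((S1.tendsto_atTop_zero.add S2.tendsto_atTop_zero).add
      S3'.tendsto_atTop_zero).add Tcross).add S3.tendsto_atTop_zero
    simp only [add_zero] at hlim
    refine squeeze_zero' (Eventually.of_forall fun k => abs_nonneg _) ?_ hlim
    filter_upwards [eventually_ge_atTop 1] with k hk
    have h1 := upper k hk
    have h2 := lower k hk
    have h3 : eps3 k ⬝ᵥ (lamseq k - lamstar) = eps3 k ⬝ᵥ lamseq k - eps3 k ⬝ᵥ lamstar :=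
      dotProduct_sub _ _ _
    have a1 := le_abs_self (eps1 k ⬝ᵥ (yseq k - ystar))
    have a2 := le_abs_self (eps2 k ⬝ᵥ (zseq k - zstar))
    have a3 := abs_le.1 (le_refl |eps3 k ⬝ᵥ lamseq k|)
    have a4 := neg_abs_le (σ k * ((zseq k - zseq (k - 1)) ⬝ᵥ (zseq k - zstar)))
    have a5 := abs_le.1 (le_refl |eps3 k ⬝ᵥ (lamseq k - lamstar)|)
    have p1 := abs_nonneg (eps1 k ⬝ᵥ (yseq k - ystar))
    have p2 := abs_nonneg (eps2 k ⬝ᵥ (zseq k - zstar))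
    have p4 := abs_nonneg (σ k * ((zseq k - zseq (k - 1)) ⬝ᵥ (zseq k - zstar)))
    have p5 := abs_nonneg (eps3 k ⬝ᵥ (lamseq k - lamstar))
    rw [sub_zero]
    exact abs_le.2 ⟨by linarith, by linarith⟩
end

section
/- (Remark after Theorem 3.5: iterate convergence of IADMM without strong convexity.) Suppose f : ℝ^{n₁} → ℝ and g : ℝ^{n₂} → ℝ are merely convex (σ_g = 0), and the IADMM setting is modified so that the penalty parameters satisfy max{β̲, τβ_k} ≤ β_{k+1} ≤ β_k for all k ≥ 1 (i.e. β_k is nonincreasing and bounded below by β̲ > 0), with the same iterate conditions (i), (ii), (iii). Suppose a KKT solution of problem (P) exists, the matrix CᵀC + Q is positive definite, and there is a positive definite matrix Θ such that β_kP_k + β_k²BᵀB ⪰ Θ for all k ≥ 1. Then the sequence (y^k, z^k, λ^k) converges, as k → ∞, to a limit that is a KKT solution of problem (P). -/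
/-!
The proof is a Lyapunov (Fejér monotonicity) argument. Write `r⁺ = B y⁺ + C z⁺ - b` for the
residual after a step, and measure the distance to a KKT point `(y*, z*, λ*)` by
`kktDist = γ⁻¹‖λ - λ*‖² + β²(‖C(z - z*)‖² + ‖z - z*‖²_Q) + β‖y - y*‖²_P`.
Monotonicity of the subdifferentials of `f` and `g` against the KKT point shows
(`IsIADMM.step_frozen`) that one step decreases `kktDist` by
`(2 - γ)β²‖r⁺‖² + β²‖C(z⁺ - z)‖² + β²‖z⁺ - z‖²_Q + β‖y⁺ - y‖²_P`, up to the cross term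
`2β²⟨r⁺, C(z⁺ - z)⟩`. Monotonicity of the subdifferential of `g` between two consecutive iterates
trades the cross term for one involving the previous residual (`IsIADMM.cross_term`), and Young's
inequality absorbs the latter once multiples of the previous `β²‖r‖²` and `β²‖Δz‖²_Q` are added to
the Lyapunov function; the Young weight must lie strictly between `(γ - 1)²` and `2 - γ`, which is
possible exactly when `γ² < 1 + γ`. Because `β_k` and `β_k P_k` are nonincreasing, changing the
weights from one step to the next only helps. This is `IsIADMM.lyap_descent`.

Hence the residual and the increments measured by `C`, `Q` and `P_k` tend to zero, and the iterates
are bounded since `CᵀC + Q` and `Θ` are positive definite (`IsIADMM.iterate_bounds`). A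
subsequence converges, its limit is a KKT point (`IsIADMM.cluster_isKKT`), and the Lyapunov
function relative to that limit is monotone and vanishes along the subsequence, hence vanishes in
the limit (`IsIADMM.lyap_tendsto_zero`); the same bounds then force the whole sequence to
converge.
-/

open Matrix Filter

/-! ### Quadratic forms -/

/-- The quadratic form `⟨x, M x⟩`, written `‖x‖²_M` when `M` is positive semidefinite. -/
def qf {n : ℕ} (M : Matrix (Fin n) (Fin n) ℝ) (x : Fin n → ℝ) : ℝ := x ⬝ᵥ M *ᵥ x

lemma qf_nonneg {n : ℕ} {M : Matrix (Fin n) (Fin n) ℝ} (hM : M.PosSemidef) (x : Fin n → ℝ) :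
    0 ≤ qf M x := by
  simpa [qf] using hM.dotProduct_mulVec_nonneg x

lemma dot_self_nonneg {n : ℕ} (x : Fin n → ℝ) : 0 ≤ x ⬝ᵥ x :=
  Finset.sum_nonneg fun i _ => mul_self_nonneg (x i)

lemma qf_sub_left {n : ℕ} (M N : Matrix (Fin n) (Fin n) ℝ) (x : Fin n → ℝ) :
    qf (M - N) x = qf M x - qf N x := by
  simp [qf, sub_mulVec]

lemma qf_add_left {n : ℕ} (M N : Matrix (Fin n) (Fin n) ℝ) (x : Fin n → ℝ) :
    qf (M + N) x = qf M x + qf N x := by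
  simp [qf, add_mulVec]

lemma qf_smul_left {n : ℕ} (c : ℝ) (M : Matrix (Fin n) (Fin n) ℝ) (x : Fin n → ℝ) :
    qf (c • M) x = c * qf M x := by
  simp [qf, smul_mulVec]

lemma transpose_mulVec_dot {m n : ℕ} (A : Matrix (Fin m) (Fin n) ℝ) (a : Fin m → ℝ)
    (x : Fin n → ℝ) : (Aᵀ *ᵥ a) ⬝ᵥ x = a ⬝ᵥ A *ᵥ x := by
  rw [mulVec_transpose, dotProduct_mulVec]

lemma qf_gram {m n : ℕ} (A : Matrix (Fin m) (Fin n) ℝ) (x : Fin n → ℝ) :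
    qf (Aᵀ * A) x = (A *ᵥ x) ⬝ᵥ (A *ᵥ x) := by
  rw [qf, ← mulVec_mulVec, dotProduct_comm, transpose_mulVec_dot]

lemma posSemidef_symm {n : ℕ} {M : Matrix (Fin n) (Fin n) ℝ} (hM : M.PosSemidef)
    (x y : Fin n → ℝ) : x ⬝ᵥ M *ᵥ y = y ⬝ᵥ M *ᵥ x := by
  have h : Mᵀ = M := by simpa [IsHermitian] using hM.1
  rw [← transpose_mulVec_dot, h, dotProduct_comm]

lemma qf_sub {n : ℕ} {M : Matrix (Fin n) (Fin n) ℝ} (hM : M.PosSemidef) (x y : Fin n → ℝ) :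
    qf M (x - y) = qf M x - 2 * (x ⬝ᵥ M *ᵥ y) + qf M y := by
  have := posSemidef_symm hM x y
  simp only [qf, mulVec_sub, dotProduct_sub, sub_dotProduct]
  linarith

lemma dot_sub_self {n : ℕ} (x y : Fin n → ℝ) :
    (x - y) ⬝ᵥ (x - y) = x ⬝ᵥ x - 2 * (x ⬝ᵥ y) + y ⬝ᵥ y := by
  have := dotProduct_comm x y
  simp only [dotProduct_sub, sub_dotProduct]
  linarith

lemma two_dot_le {n : ℕ} (x y : Fin n → ℝ) : 2 * (x ⬝ᵥ y) ≤ x ⬝ᵥ x + y ⬝ᵥ y := by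
  have := dot_self_nonneg (x - y)
  rw [dot_sub_self] at this
  linarith

lemma dot_add_self_le {n : ℕ} (x y : Fin n → ℝ) :
    (x + y) ⬝ᵥ (x + y) ≤ 2 * (x ⬝ᵥ x) + 2 * (y ⬝ᵥ y) := by
  have := two_dot_le x y
  have h := dotProduct_comm x y
  simp only [dotProduct_add, add_dotProduct]
  linarith

/-- Cauchy–Schwarz for the semi-inner product of a positive semidefinite matrix. -/
lemma posSemidef_cauchy_schwarz {n : ℕ} {M : Matrix (Fin n) (Fin n) ℝ} (hM : M.PosSemidef)
    (x y : Fin n → ℝ) : (x ⬝ᵥ M *ᵥ y) ^ 2 ≤ qf M x * qf M y := by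
  have h : ∀ t : ℝ, 0 ≤ qf M x * (t * t) + (2 * (x ⬝ᵥ M *ᵥ y)) * t + qf M y := by
    intro t
    have h1 := qf_nonneg hM (t • x + y)
    have h2 := posSemidef_symm hM x y
    simp only [qf, mulVec_add, mulVec_smul, dotProduct_add, add_dotProduct, smul_dotProduct,
      dotProduct_smul, smul_eq_mul] at h1 ⊢
    rw [← h2] at h1
    linarith
  have := discrim_le_zero h
  rw [discrim] at this
  linarith

lemma continuous_qf {n : ℕ} (M : Matrix (Fin n) (Fin n) ℝ) : Continuous (qf M) := by
  unfold qf
  fun_prop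

/-- A positive definite quadratic form dominates a multiple of the squared (sup) norm, by
compactness of the unit sphere. -/
lemma posDef_coercive {n : ℕ} {M : Matrix (Fin n) (Fin n) ℝ} (hM : M.PosDef) :
    ∃ c : ℝ, 0 < c ∧ ∀ x, c * ‖x‖ ^ 2 ≤ qf M x := by
  have hpos : ∀ x : Fin n → ℝ, x ≠ 0 → 0 < qf M x := fun x hx => by
    simpa [qf] using hM.dotProduct_mulVec_pos hx
  obtain ⟨c, hc, hcs⟩ : ∃ c : ℝ, 0 < c ∧ ∀ x ∈ Metric.sphere (0 : Fin n → ℝ) 1, c ≤ qf M x := by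
    rcases (Metric.sphere (0 : Fin n → ℝ) 1).eq_empty_or_nonempty with he | hne
    · exact ⟨1, one_pos, by simp [he]⟩
    · obtain ⟨x₀, hx₀, hmin⟩ := (isCompact_sphere (0 : Fin n → ℝ) 1).exists_isMinOn hne
        (continuous_qf M).continuousOn
      refine ⟨qf M x₀, hpos x₀ ?_, fun x hx => hmin hx⟩
      rintro rfl
      simp at hx₀
  refine ⟨c, hc, fun x => ?_⟩
  rcases eq_or_ne x 0 with rfl | hx
  · simp [qf]
  · have hn : 0 < ‖x‖ := norm_pos_iff.mpr hx
    have h1 := hcs (‖x‖⁻¹ • x) (by simp [norm_smul, hn.ne'])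
    simp only [qf, mulVec_smul, dotProduct_smul, smul_dotProduct, smul_eq_mul] at h1 ⊢
    have h2 := mul_le_mul_of_nonneg_right h1 (sq_nonneg ‖x‖)
    calc c * ‖x‖ ^ 2 ≤ _ := h2
      _ = _ := by field_simp

lemma tendsto_zero_of_posDef {n : ℕ} {M : Matrix (Fin n) (Fin n) ℝ} (hM : M.PosDef)
    {x : ℕ → Fin n → ℝ} (h : Tendsto (fun k => qf M (x k)) atTop (nhds 0)) :
    Tendsto x atTop (nhds 0) := by
  obtain ⟨c, hc, hle⟩ := posDef_coercive hM
  have h1 : Tendsto (fun k => ‖x k‖ ^ 2) atTop (nhds 0) := by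
    refine squeeze_zero (fun k => sq_nonneg _) (fun k => ?_)
      (by simpa using h.const_mul c⁻¹)
    rw [inv_mul_eq_div, le_div_iff₀ hc, mul_comm]
    exact hle _
  have h2 := h1.sqrt
  simp only [Real.sqrt_sq (norm_nonneg _), Real.sqrt_zero] at h2
  exact tendsto_zero_iff_norm_tendsto_zero.mpr h2

lemma tendsto_zero_of_dot_self {n : ℕ} {x : ℕ → Fin n → ℝ}
    (h : Tendsto (fun k => x k ⬝ᵥ x k) atTop (nhds 0)) : Tendsto x atTop (nhds 0) :=
  tendsto_zero_of_posDef Matrix.PosDef.one (by simpa [qf] using h)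

lemma bounded_of_posDef {n : ℕ} {M : Matrix (Fin n) (Fin n) ℝ} (hM : M.PosDef)
    {x : ℕ → Fin n → ℝ} {K : ℝ} (h : ∀ k, qf M (x k) ≤ K) : ∃ R, ∀ k, ‖x k‖ ≤ R := by
  obtain ⟨c, hc, hle⟩ := posDef_coercive hM
  refine ⟨Real.sqrt (K / c), fun k => Real.le_sqrt_of_sq_le ?_⟩
  rw [le_div_iff₀ hc, mul_comm]
  exact (hle _).trans (h k)

/-! ### Subgradients, the iteration and KKT points -/

lemma subgradient_monotone {p : ℕ} {h : (Fin p → ℝ) → ℝ} {ξ η u v : Fin p → ℝ}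
    (hξ : IsSubgradient h ξ u) (hη : IsSubgradient h η v) : 0 ≤ (ξ - η) ⬝ᵥ (u - v) := by
  have h1 := hξ v
  have h2 := hη u
  rw [← neg_sub u v, dotProduct_neg] at h1
  rw [sub_dotProduct]
  linarith

lemma continuous_of_convexOn_univ {p : ℕ} {h : (Fin p → ℝ) → ℝ} (hh : ConvexOn ℝ Set.univ h) :
    Continuous h :=
  continuousOn_univ.mp (hh.continuousOn isOpen_univ)

/-- The data of the IADMM iteration with nonincreasing penalties, indexed from `0`.
The upper bound on `γ` is recorded as `0 < 1 + γ - γ²`. -/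
structure IsIADMM {m n₁ n₂ : ℕ}
    (B : Matrix (Fin m) (Fin n₁) ℝ) (C : Matrix (Fin m) (Fin n₂) ℝ) (b : Fin m → ℝ)
    (f : (Fin n₁ → ℝ) → ℝ) (g : (Fin n₂ → ℝ) → ℝ) (γ βlow : ℝ)
    (Q : Matrix (Fin n₂) (Fin n₂) ℝ) (β : ℕ → ℝ) (P : ℕ → Matrix (Fin n₁) (Fin n₁) ℝ)
    (y : ℕ → Fin n₁ → ℝ) (z : ℕ → Fin n₂ → ℝ) (lam : ℕ → Fin m → ℝ) : Prop where
  one_lt : 1 < γ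
  delta_pos : 0 < 1 + γ - γ ^ 2
  low_pos : 0 < βlow
  Q_psd : Q.PosSemidef
  low_le : ∀ k, βlow ≤ β k
  anti : ∀ k, β (k + 1) ≤ β k
  P_psd : ∀ k, (P k).PosSemidef
  P_anti : ∀ k, (β k • P k - β (k + 1) • P (k + 1)).PosSemidef
  step_y : ∀ k, IsSubgradient f
        (-(Bᵀ *ᵥ lam k + β k • (Bᵀ *ᵥ (B *ᵥ y (k + 1) + C *ᵥ z k - b))
            + P k *ᵥ (y (k + 1) - y k))) (y (k + 1))
  step_z : ∀ k, IsSubgradient g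
        (-(Cᵀ *ᵥ lam k + β k • (Cᵀ *ᵥ (B *ᵥ y (k + 1) + C *ᵥ z (k + 1) - b))
            + β k • (Q *ᵥ (z (k + 1) - z k)))) (z (k + 1))
  step_lam : ∀ k, lam (k + 1) = lam k + (γ * β k) • (B *ᵥ y (k + 1) + C *ᵥ z (k + 1) - b)

/-- `(ys, zs, ls)` is a KKT solution of the problem. -/
structure IsKKT {m n₁ n₂ : ℕ}
    (B : Matrix (Fin m) (Fin n₁) ℝ) (C : Matrix (Fin m) (Fin n₂) ℝ) (b : Fin m → ℝ)
    (f : (Fin n₁ → ℝ) → ℝ) (g : (Fin n₂ → ℝ) → ℝ)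
    (ys : Fin n₁ → ℝ) (zs : Fin n₂ → ℝ) (ls : Fin m → ℝ) : Prop where
  sub_y : IsSubgradient f (-(Bᵀ *ᵥ ls)) ys
  sub_z : IsSubgradient g (-(Cᵀ *ᵥ ls)) zs
  feas : B *ᵥ ys + C *ᵥ zs = b

/-- The weighted squared distance
`γ⁻¹‖λ - λ*‖² + β²(‖C(z - z*)‖² + ‖z - z*‖²_Q) + β‖y - y*‖²_P` of an iterate to a KKT point. -/
noncomputable def kktDist {m n₁ n₂ : ℕ} (C : Matrix (Fin m) (Fin n₂) ℝ) (γ : ℝ)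
    (Q : Matrix (Fin n₂) (Fin n₂) ℝ) (β : ℝ) (P : Matrix (Fin n₁) (Fin n₁) ℝ)
    (u : Fin n₁ → ℝ) (v : Fin n₂ → ℝ) (w : Fin m → ℝ) : ℝ :=
  γ⁻¹ * (w ⬝ᵥ w) + β ^ 2 * ((C *ᵥ v) ⬝ᵥ (C *ᵥ v) + qf Q v) + β * qf P u

section descent

variable {m n₁ n₂ : ℕ}
  {B : Matrix (Fin m) (Fin n₁) ℝ} {C : Matrix (Fin m) (Fin n₂) ℝ} {b : Fin m → ℝ}
  {f : (Fin n₁ → ℝ) → ℝ} {g : (Fin n₂ → ℝ) → ℝ} {γ βlow : ℝ}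
  {Q : Matrix (Fin n₂) (Fin n₂) ℝ} {β : ℕ → ℝ} {P : ℕ → Matrix (Fin n₁) (Fin n₁) ℝ}
  {y : ℕ → Fin n₁ → ℝ} {z : ℕ → Fin n₂ → ℝ} {lam : ℕ → Fin m → ℝ}
  {ys : Fin n₁ → ℝ} {zs : Fin n₂ → ℝ} {ls : Fin m → ℝ}

lemma IsIADMM.beta_pos (h : IsIADMM B C b f g γ βlow Q β P y z lam) (k : ℕ) : 0 < β k :=
  h.low_pos.trans_le (h.low_le k)

lemma kktDist_nonneg {β₀ : ℝ} {P₀ : Matrix (Fin n₁) (Fin n₁) ℝ} (hγ : 0 < γ) (hβ : 0 < β₀)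
    (hQ : Q.PosSemidef) (hP : P₀.PosSemidef) (u : Fin n₁ → ℝ) (v : Fin n₂ → ℝ) (w : Fin m → ℝ) :
    0 ≤ kktDist C γ Q β₀ P₀ u v w := by
  have h1 := dot_self_nonneg w
  have h2 := dot_self_nonneg (C *ᵥ v)
  have h3 := qf_nonneg hQ v
  have h4 := qf_nonneg hP u
  unfold kktDist
  positivity

/-! ### Lyapunov descent -/

/-- One step with the weights `β k`, `P k` frozen: monotonicity of the two subdifferentials
against the KKT point. -/
lemma IsIADMM.step_frozen (h : IsIADMM B C b f g γ βlow Q β P y z lam)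
    (hs : IsKKT B C b f g ys zs ls) (k : ℕ) :
    kktDist C γ Q (β k) (P k) (y (k + 1) - ys) (z (k + 1) - zs) (lam (k + 1) - ls)
      + (2 - γ) * (β k ^ 2 * ((B *ᵥ y (k + 1) + C *ᵥ z (k + 1) - b) ⬝ᵥ
          (B *ᵥ y (k + 1) + C *ᵥ z (k + 1) - b)))
      + β k ^ 2 * ((C *ᵥ (z (k + 1) - z k)) ⬝ᵥ (C *ᵥ (z (k + 1) - z k)))
      + β k ^ 2 * qf Q (z (k + 1) - z k) + β k * qf (P k) (y (k + 1) - y k)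
    ≤ kktDist C γ Q (β k) (P k) (y k - ys) (z k - zs) (lam k - ls)
      + 2 * β k ^ 2 * ((B *ᵥ y (k + 1) + C *ᵥ z (k + 1) - b) ⬝ᵥ (C *ᵥ (z (k + 1) - z k))) := by
  have hβ := h.beta_pos k
  have hγ : 0 < γ := one_pos.trans h.one_lt
  have m1 := subgradient_monotone (h.step_y k) hs.sub_y
  have m2 := subgradient_monotone (h.step_z k) hs.sub_z
  have hl := h.step_lam k
  generalize hu' : y (k + 1) - ys = u' at *
  generalize hv' : z (k + 1) - zs = v' at *
  generalize hu : y k - ys = u at *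
  generalize hv : z k - zs = v at *
  generalize hw : lam k - ls = w at *
  have e1 : y (k + 1) - y k = u' - u := by rw [← hu', ← hu]; abel
  have e2 : z (k + 1) - z k = v' - v := by rw [← hv', ← hv]; abel
  have er : B *ᵥ y (k + 1) + C *ᵥ z (k + 1) - b = B *ᵥ u' + C *ᵥ v' := by
    rw [← hu', ← hv', ← hs.feas, mulVec_sub, mulVec_sub]; abel
  have er' : B *ᵥ y (k + 1) + C *ᵥ z k - b = B *ᵥ u' + C *ᵥ v := by
    rw [← hu', ← hv, ← hs.feas, mulVec_sub, mulVec_sub]; abel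
  have ew : lam (k + 1) - ls = w + (γ * β k) • (B *ᵥ u' + C *ᵥ v') := by
    rw [hl, ← hw, er]; abel
  have el : lam k = w + ls := by rw [← hw]; abel
  rw [e1, er', el] at m1
  rw [e2, er, el] at m2
  rw [e1, e2, er, ew]
  have hB : ∀ a, (Bᵀ *ᵥ a) ⬝ᵥ u' = a ⬝ᵥ B *ᵥ u' := fun a => transpose_mulVec_dot B a u'
  have hC : ∀ a, (Cᵀ *ᵥ a) ⬝ᵥ v' = a ⬝ᵥ C *ᵥ v' := fun a => transpose_mulVec_dot C a v'
  have hPs : (P k *ᵥ (u' - u)) ⬝ᵥ u' = qf (P k) u' - u' ⬝ᵥ P k *ᵥ u := by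
    rw [dotProduct_comm, mulVec_sub, dotProduct_sub, qf]
  have hQs : (Q *ᵥ (v' - v)) ⬝ᵥ v' = qf Q v' - v' ⬝ᵥ Q *ᵥ v := by
    rw [dotProduct_comm, mulVec_sub, dotProduct_sub, qf]
  rw [sub_dotProduct, neg_dotProduct, neg_dotProduct, add_dotProduct, add_dotProduct,
    smul_dotProduct, hB, hB, hB, hPs] at m1
  rw [sub_dotProduct, neg_dotProduct, neg_dotProduct, add_dotProduct, add_dotProduct,
    smul_dotProduct, smul_dotProduct, hC, hC, hC, hQs] at m2
  unfold kktDist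
  rw [qf_sub (h.P_psd k), qf_sub h.Q_psd, mulVec_sub]
  generalize B *ᵥ u' = p at *
  generalize C *ᵥ v' = c' at *
  generalize C *ᵥ v = c at *
  have c1 := dotProduct_comm p c'
  have c2 := dotProduct_comm p c
  have c3 := dotProduct_comm c c'
  have c4 := dotProduct_comm p w
  have c5 := dotProduct_comm c w
  have c6 := dotProduct_comm c' w
  simp only [add_dotProduct, dotProduct_add, sub_dotProduct, dotProduct_sub, smul_dotProduct,
    dotProduct_smul, smul_eq_mul] at m1 m2 ⊢
  simp only [c1, c2, c3, c4, c6] at m1 m2 ⊢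
  have hm := mul_nonneg (mul_nonneg zero_le_two hβ.le) (add_nonneg m1 m2)
  have hi : ∀ t, γ⁻¹ * (γ * β k * t) = β k * t := fun t => by field_simp
  rw [mul_add γ⁻¹, mul_add γ⁻¹, hi, hi]
  linarith

/-- The inner product of residual and increment in `step_frozen` is controlled by monotonicity of the subdifferential of `g`
between two consecutive iterates. -/
lemma IsIADMM.cross_term (h : IsIADMM B C b f g γ βlow Q β P y z lam) (k : ℕ) :
    2 * β (k + 1) ^ 2 * ((B *ᵥ y (k + 1 + 1) + C *ᵥ z (k + 1 + 1) - b) ⬝ᵥ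
        (C *ᵥ (z (k + 1 + 1) - z (k + 1))))
      + β (k + 1) ^ 2 * qf Q (z (k + 1 + 1) - z (k + 1))
    ≤ β k ^ 2 * qf Q (z (k + 1) - z k)
      - 2 * (γ - 1) * (β k * β (k + 1)) * ((B *ᵥ y (k + 1) + C *ᵥ z (k + 1) - b) ⬝ᵥ
        (C *ᵥ (z (k + 1 + 1) - z (k + 1)))) := by
  have hβ := h.beta_pos (k + 1)
  have m := subgradient_monotone (h.step_z (k + 1)) (h.step_z k)
  rw [h.step_lam k] at m
  generalize B *ᵥ y (k + 1 + 1) + C *ᵥ z (k + 1 + 1) - b = r' at *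
  generalize B *ᵥ y (k + 1) + C *ᵥ z (k + 1) - b = r at *
  generalize z (k + 1 + 1) - z (k + 1) = d' at *
  generalize z (k + 1) - z k = d at *
  have hC : ∀ a, (Cᵀ *ᵥ a) ⬝ᵥ d' = a ⬝ᵥ C *ᵥ d' := fun a => transpose_mulVec_dot C a d'
  have hQ1 : (Q *ᵥ d') ⬝ᵥ d' = qf Q d' := dotProduct_comm _ _
  have hQ2 : (Q *ᵥ d) ⬝ᵥ d' = d' ⬝ᵥ Q *ᵥ d := dotProduct_comm _ _
  simp only [sub_dotProduct, neg_dotProduct, add_dotProduct, smul_dotProduct, hC, hQ1, hQ2,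
    smul_eq_mul] at m
  have hm := mul_nonneg (mul_nonneg zero_le_two hβ.le) m
  have hq := qf_nonneg h.Q_psd (β (k + 1) • d' - β k • d)
  rw [qf_sub h.Q_psd] at hq
  simp only [qf, mulVec_smul, smul_dotProduct, dotProduct_smul, smul_eq_mul] at hq hm ⊢
  linarith

/-- The weight of the residual term in the Lyapunov function; it lies strictly between
`(γ - 1)²` and `2 - γ`, which is where `γ < (1 + √5) / 2` enters. -/
noncomputable def kap (γ : ℝ) : ℝ := ((γ - 1) ^ 2 + (2 - γ)) / 2

/-- The Lyapunov function at the iterate `k + 1`, relative to the KKT point `(ys, zs, ls)`. -/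
noncomputable def lyap (B : Matrix (Fin m) (Fin n₁) ℝ) (C : Matrix (Fin m) (Fin n₂) ℝ)
    (b : Fin m → ℝ) (γ : ℝ) (Q : Matrix (Fin n₂) (Fin n₂) ℝ) (β : ℕ → ℝ)
    (P : ℕ → Matrix (Fin n₁) (Fin n₁) ℝ)
    (y : ℕ → Fin n₁ → ℝ) (z : ℕ → Fin n₂ → ℝ) (lam : ℕ → Fin m → ℝ)
    (ys : Fin n₁ → ℝ) (zs : Fin n₂ → ℝ) (ls : Fin m → ℝ) (k : ℕ) : ℝ :=
  kktDist C γ Q (β (k + 1)) (P (k + 1)) (y (k + 1) - ys) (z (k + 1) - zs) (lam (k + 1) - ls)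
    + kap γ * (β k ^ 2 * ((B *ᵥ y (k + 1) + C *ᵥ z (k + 1) - b) ⬝ᵥ
        (B *ᵥ y (k + 1) + C *ᵥ z (k + 1) - b)))
    + β k ^ 2 * qf Q (z (k + 1) - z k)

lemma kap_pos (hδ : 0 < 1 + γ - γ ^ 2) : 0 < kap γ := by
  unfold kap; nlinarith [sq_nonneg (γ - 1)]

lemma IsIADMM.kktDist_anti (h : IsIADMM B C b f g γ βlow Q β P y z lam) (k : ℕ)
    (u : Fin n₁ → ℝ) (v : Fin n₂ → ℝ) (w : Fin m → ℝ) :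
    kktDist C γ Q (β (k + 1)) (P (k + 1)) u v w ≤ kktDist C γ Q (β k) (P k) u v w := by
  have h1 := qf_nonneg (h.P_anti k) u
  rw [qf_sub_left, qf_smul_left, qf_smul_left] at h1
  have h2 : β (k + 1) ^ 2 ≤ β k ^ 2 := pow_le_pow_left₀ (h.beta_pos _).le (h.anti k) 2
  have h3 := mul_le_mul_of_nonneg_right h2
    (add_nonneg (dot_self_nonneg (C *ᵥ v)) (qf_nonneg h.Q_psd v))
  unfold kktDist
  linarith

lemma IsIADMM.lyap_descent (h : IsIADMM B C b f g γ βlow Q β P y z lam)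
    (hs : IsKKT B C b f g ys zs ls) (k : ℕ) :
    lyap B C b γ Q β P y z lam ys zs ls (k + 1)
      + ((2 - γ - kap γ) * (β (k + 1) ^ 2 * ((B *ᵥ y (k + 1 + 1) + C *ᵥ z (k + 1 + 1) - b) ⬝ᵥ
          (B *ᵥ y (k + 1 + 1) + C *ᵥ z (k + 1 + 1) - b)))
        + (1 - (γ - 1) ^ 2 / kap γ) * (β (k + 1) ^ 2 *
          ((C *ᵥ (z (k + 1 + 1) - z (k + 1))) ⬝ᵥ (C *ᵥ (z (k + 1 + 1) - z (k + 1)))))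
        + β (k + 1) ^ 2 * qf Q (z (k + 1 + 1) - z (k + 1))
        + β (k + 1) * qf (P (k + 1)) (y (k + 1 + 1) - y (k + 1)))
    ≤ lyap B C b γ Q β P y z lam ys zs ls k := by
  have h1 := h.step_frozen hs (k + 1)
  have h2 := h.cross_term k
  have h3 := h.kktDist_anti (k + 1) (y (k + 1 + 1) - ys) (z (k + 1 + 1) - zs)
    (lam (k + 1 + 1) - ls)
  have hκ := kap_pos h.delta_pos
  unfold lyap
  generalize B *ᵥ y (k + 1 + 1) + C *ᵥ z (k + 1 + 1) - b = r' at *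
  generalize B *ᵥ y (k + 1) + C *ᵥ z (k + 1) - b = r at *
  generalize C *ᵥ (z (k + 1 + 1) - z (k + 1)) = d at *
  -- Young's inequality for the product of `r` and `d`, with weight `kap γ`
  have h4 : -(2 * (γ - 1) * (β k * β (k + 1)) * (r ⬝ᵥ d)) ≤
      kap γ * (β k ^ 2 * (r ⬝ᵥ r)) + (γ - 1) ^ 2 / kap γ * (β (k + 1) ^ 2 * (d ⬝ᵥ d)) := by
    have hq := dot_self_nonneg ((kap γ * β k) • r - (-((γ - 1) * β (k + 1))) • d)
    rw [dot_sub_self] at hq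
    simp only [smul_dotProduct, dotProduct_smul, smul_eq_mul] at hq
    have := mul_nonneg (inv_nonneg.mpr hκ.le) hq
    have e : (kap γ)⁻¹ * (kap γ * β k * (kap γ * β k * (r ⬝ᵥ r))
        - 2 * (-((γ - 1) * β (k + 1)) * (kap γ * β k * (r ⬝ᵥ d)))
        + -((γ - 1) * β (k + 1)) * (-((γ - 1) * β (k + 1)) * (d ⬝ᵥ d)))
        = kap γ * (β k ^ 2 * (r ⬝ᵥ r)) + (γ - 1) ^ 2 / kap γ * (β (k + 1) ^ 2 * (d ⬝ᵥ d))
          + 2 * (γ - 1) * (β k * β (k + 1)) * (r ⬝ᵥ d) := by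
      field_simp
      ring
    linarith
  linarith

/-- The Lyapunov function is nonnegative and decreases by a positive multiple of the squared
residual and increments, so these tend to `0` (the penalties being bounded below). -/
lemma IsIADMM.increments_tendsto (h : IsIADMM B C b f g γ βlow Q β P y z lam)
    (hs : IsKKT B C b f g ys zs ls) :
    Antitone (lyap B C b γ Q β P y z lam ys zs ls) ∧
    (∀ k, 0 ≤ lyap B C b γ Q β P y z lam ys zs ls k) ∧
    Tendsto (fun k => B *ᵥ y (k + 1) + C *ᵥ z (k + 1) - b) atTop (nhds 0) ∧
    Tendsto (fun k => C *ᵥ (z (k + 1) - z k)) atTop (nhds 0) ∧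
    Tendsto (fun k => qf Q (z (k + 1) - z k)) atTop (nhds 0) ∧
    Tendsto (fun k => β k * qf (P k) (y (k + 1) - y k)) atTop (nhds 0) := by
  have hδ := h.delta_pos
  have hκ := kap_pos hδ
  have hγ : 0 < γ := one_pos.trans h.one_lt
  have hc1 : 0 < 2 - γ - kap γ := by unfold kap; linarith
  have hc2 : 0 < 1 - (γ - 1) ^ 2 / kap γ := by
    rw [sub_pos, div_lt_one hκ]; unfold kap; linarith
  have hR := fun k => mul_nonneg hc1.le (mul_nonneg (sq_nonneg (β (k + 1)))
    (dot_self_nonneg (B *ᵥ y (k + 1 + 1) + C *ᵥ z (k + 1 + 1) - b)))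
  have hX := fun k => mul_nonneg hc2.le (mul_nonneg (sq_nonneg (β (k + 1)))
    (dot_self_nonneg (C *ᵥ (z (k + 1 + 1) - z (k + 1)))))
  have hS := fun k => mul_nonneg (sq_nonneg (β (k + 1)))
    (qf_nonneg h.Q_psd (z (k + 1 + 1) - z (k + 1)))
  have hU := fun k => mul_nonneg (h.beta_pos (k + 1)).le
    (qf_nonneg (h.P_psd (k + 1)) (y (k + 1 + 1) - y (k + 1)))
  have hd := h.lyap_descent hs
  have hanti : Antitone (lyap B C b γ Q β P y z lam ys zs ls) := antitone_nat_of_succ_le fun k => by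
    linarith [hR k, hX k, hS k, hU k, hd k]
  have hnn : ∀ k, 0 ≤ lyap B C b γ Q β P y z lam ys zs ls k := fun k => by
    have h1 := kktDist_nonneg (C := C) hγ (h.beta_pos (k + 1)) h.Q_psd (h.P_psd (k + 1))
      (y (k + 1) - ys) (z (k + 1) - zs) (lam (k + 1) - ls)
    have h2 := dot_self_nonneg (B *ᵥ y (k + 1) + C *ᵥ z (k + 1) - b)
    have h3 := qf_nonneg h.Q_psd (z (k + 1) - z k)
    unfold lyap
    positivity
  have hlim := tendsto_atTop_ciInf hanti ⟨0, by rintro _ ⟨k, rfl⟩; exact hnn k⟩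
  have hdiff := hlim.sub (hlim.comp (tendsto_add_atTop_nat 1))
  rw [sub_self] at hdiff
  have hlow : ∀ k, βlow ^ 2 ≤ β k ^ 2 := fun k => pow_le_pow_left₀ h.low_pos.le (h.low_le k) 2
  have hl2 : 0 < βlow ^ 2 := pow_pos h.low_pos 2
  -- a nonnegative sequence whose `c * β²`-multiple is below the Lyapunov decrease vanishes
  have aux : ∀ (c : ℝ) (a : ℕ → ℝ), 0 < c → (∀ k, 0 ≤ a k) →
      (∀ k, c * (β (k + 1) ^ 2 * a (k + 1)) ≤ lyap B C b γ Q β P y z lam ys zs ls k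
        - lyap B C b γ Q β P y z lam ys zs ls (k + 1)) → Tendsto a atTop (nhds 0) := by
    intro c a hc ha hle
    rw [← tendsto_add_atTop_iff_nat 1]
    refine squeeze_zero (fun k => ha _) (fun k => ?_)
      (by simpa using hdiff.const_mul (c * βlow ^ 2)⁻¹)
    rw [inv_mul_eq_div, le_div_iff₀ (by positivity)]
    refine le_trans ?_ (hle k)
    have := mul_le_mul_of_nonneg_left (mul_le_mul_of_nonneg_right (hlow (k + 1)) (ha (k + 1))) hc.le
    linarith
  refine ⟨hanti, hnn, ?_, ?_, ?_, ?_⟩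
  · refine tendsto_zero_of_dot_self (aux _ _ hc1 (fun k => dot_self_nonneg _) fun k => ?_)
    linarith [hX k, hS k, hU k, hd k]
  · refine tendsto_zero_of_dot_self (aux _ _ hc2 (fun k => dot_self_nonneg _) fun k => ?_)
    linarith [hR k, hS k, hU k, hd k]
  · refine aux 1 _ one_pos (fun k => qf_nonneg h.Q_psd _) fun k => ?_
    linarith [hR k, hX k, hU k, hd k]
  · rw [← tendsto_add_atTop_iff_nat 1]
    refine squeeze_zero hU (fun k => ?_) hdiff
    simp only [Function.comp]
    linarith [hR k, hX k, hS k, hd k]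

lemma IsIADMM.kktDist_le_lyap (h : IsIADMM B C b f g γ βlow Q β P y z lam) (k : ℕ) :
    kktDist C γ Q (β (k + 1)) (P (k + 1)) (y (k + 1) - ys) (z (k + 1) - zs) (lam (k + 1) - ls)
      ≤ lyap B C b γ Q β P y z lam ys zs ls k := by
  have hκ := kap_pos h.delta_pos
  have h2 := dot_self_nonneg (B *ᵥ y (k + 1) + C *ᵥ z (k + 1) - b)
  have h3 := qf_nonneg h.Q_psd (z (k + 1) - z k)
  have h4 : 0 ≤ kap γ * (β k ^ 2 * ((B *ᵥ y (k + 1) + C *ᵥ z (k + 1) - b) ⬝ᵥ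
        (B *ᵥ y (k + 1) + C *ᵥ z (k + 1) - b))) := by positivity
  have h5 : 0 ≤ β k ^ 2 * qf Q (z (k + 1) - z k) := by positivity
  unfold lyap
  linarith

lemma IsIADMM.beta_antitone (h : IsIADMM B C b f g γ βlow Q β P y z lam) : Antitone β :=
  antitone_nat_of_succ_le h.anti

lemma IsIADMM.beta_qf_le (h : IsIADMM B C b f g γ βlow Q β P y z lam) (k : ℕ)
    (u : Fin n₁ → ℝ) : β k * qf (P k) u ≤ β 0 * qf (P 0) u := by
  have : Antitone fun k => β k * qf (P k) u := antitone_nat_of_succ_le fun k => by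
    have h1 := qf_nonneg (h.P_anti k) u
    rw [qf_sub_left, qf_smul_left, qf_smul_left] at h1
    linarith
  exact this (Nat.zero_le k)

/-! ### Bounds on the iterates -/

/-- The three components of the distance to a KKT point are controlled by the Lyapunov function
and the residual. -/
lemma IsIADMM.iterate_bounds (h : IsIADMM B C b f g γ βlow Q β P y z lam)
    (hs : IsKKT B C b f g ys zs ls) {Θ : Matrix (Fin n₁) (Fin n₁) ℝ}
    (hΘ : ∀ k, (β k • P k + β k ^ 2 • (Bᵀ * B) - Θ).PosSemidef) (k : ℕ) :
    (lam (k + 1) - ls) ⬝ᵥ (lam (k + 1) - ls) ≤ γ * lyap B C b γ Q β P y z lam ys zs ls k ∧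
    qf (Cᵀ * C + Q) (z (k + 1) - zs) ≤
      (βlow ^ 2)⁻¹ * lyap B C b γ Q β P y z lam ys zs ls k ∧
    qf Θ (y (k + 1) - ys) ≤ lyap B C b γ Q β P y z lam ys zs ls k
      + β 0 ^ 2 * (2 * ((B *ᵥ y (k + 1) + C *ᵥ z (k + 1) - b) ⬝ᵥ
          (B *ᵥ y (k + 1) + C *ᵥ z (k + 1) - b))
        + 2 * ((βlow ^ 2)⁻¹ * lyap B C b γ Q β P y z lam ys zs ls k)) := by
  have hγ : 0 < γ := one_pos.trans h.one_lt
  have hL := h.kktDist_le_lyap (ys := ys) (zs := zs) (ls := ls) k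
  have hΘ' := qf_nonneg (hΘ (k + 1)) (y (k + 1) - ys)
  have er : B *ᵥ y (k + 1) + C *ᵥ z (k + 1) - b
      = B *ᵥ (y (k + 1) - ys) + C *ᵥ (z (k + 1) - zs) := by
    rw [← hs.feas, mulVec_sub, mulVec_sub]; abel
  rw [er]
  generalize lyap B C b γ Q β P y z lam ys zs ls k = L at *
  generalize lam (k + 1) - ls = w at *
  generalize z (k + 1) - zs = v at *
  generalize y (k + 1) - ys = u at *
  rw [qf_sub_left, qf_add_left, qf_smul_left, qf_smul_left, qf_gram] at hΘ'
  unfold kktDist at hL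
  have hw : 0 ≤ γ⁻¹ * (w ⬝ᵥ w) := mul_nonneg (inv_nonneg.mpr hγ.le) (dot_self_nonneg w)
  have hC := dot_self_nonneg (C *ᵥ v)
  have hQ := qf_nonneg h.Q_psd v
  have hv := mul_nonneg (sq_nonneg (β (k + 1))) (add_nonneg hC hQ)
  have hu := mul_nonneg (h.beta_pos (k + 1)).le (qf_nonneg (h.P_psd (k + 1)) u)
  have hz : (C *ᵥ v) ⬝ᵥ (C *ᵥ v) + qf Q v ≤ (βlow ^ 2)⁻¹ * L := by
    rw [inv_mul_eq_div, le_div_iff₀ (pow_pos h.low_pos 2), mul_comm]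
    have := mul_le_mul_of_nonneg_right
      (pow_le_pow_left₀ h.low_pos.le (h.low_le (k + 1)) 2) (add_nonneg hC hQ)
    linarith
  refine ⟨?_, by rwa [qf_add_left, qf_gram], ?_⟩
  · have : γ⁻¹ * (w ⬝ᵥ w) ≤ L := by linarith
    rwa [inv_mul_eq_div, div_le_iff₀ hγ, mul_comm] at this
  · have hB := dot_add_self_le (B *ᵥ u + C *ᵥ v) (-(C *ᵥ v))
    rw [add_neg_cancel_right, neg_dotProduct_neg] at hB
    have h1 := mul_le_mul_of_nonneg_right
      (pow_le_pow_left₀ (h.beta_pos (k + 1)).le (h.beta_antitone (Nat.zero_le (k + 1))) 2)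
      (dot_self_nonneg (B *ᵥ u))
    have h2 : (B *ᵥ u) ⬝ᵥ (B *ᵥ u) ≤ 2 * ((B *ᵥ u + C *ᵥ v) ⬝ᵥ (B *ᵥ u + C *ᵥ v))
        + 2 * ((βlow ^ 2)⁻¹ * L) := by linarith
    have h3 := mul_le_mul_of_nonneg_left h2 (sq_nonneg (β 0))
    linarith

/-! ### Cluster points and convergence -/

lemma tendsto_zero_of_sq {a : ℕ → ℝ} (h : Tendsto (fun k => a k ^ 2) atTop (nhds 0)) :
    Tendsto a atTop (nhds 0) := by
  have h2 := h.sqrt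
  simp only [Real.sqrt_sq_eq_abs, Real.sqrt_zero] at h2
  exact (tendsto_zero_iff_abs_tendsto_zero a).mpr h2

lemma IsIADMM.beta_tendsto (h : IsIADMM B C b f g γ βlow Q β P y z lam) :
    ∃ βi, Tendsto β atTop (nhds βi) :=
  ⟨_, tendsto_atTop_ciInf h.beta_antitone ⟨βlow, by rintro _ ⟨k, rfl⟩; exact h.low_le k⟩⟩

lemma tendsto_dot {n : ℕ} {x x' : ℕ → Fin n → ℝ} {a a' : Fin n → ℝ}
    (h : Tendsto x atTop (nhds a)) (h' : Tendsto x' atTop (nhds a')) :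
    Tendsto (fun k => x k ⬝ᵥ x' k) atTop (nhds (a ⬝ᵥ a')) := by
  have hc : Continuous fun p : (Fin n → ℝ) × (Fin n → ℝ) => p.1 ⬝ᵥ p.2 := by fun_prop
  exact (hc.tendsto (a, a')).comp (h.prodMk_nhds h')

lemma tendsto_mulVec {m n : ℕ} (A : Matrix (Fin m) (Fin n) ℝ) {x : ℕ → Fin n → ℝ}
    {a : Fin n → ℝ} (h : Tendsto x atTop (nhds a)) :
    Tendsto (fun k => A *ᵥ x k) atTop (nhds (A *ᵥ a)) := by
  have hc : Continuous fun p : Fin n → ℝ => A *ᵥ p := by fun_prop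
  exact (hc.tendsto a).comp h

lemma tendsto_qf {n : ℕ} (A : Matrix (Fin n) (Fin n) ℝ) {x : ℕ → Fin n → ℝ}
    {a : Fin n → ℝ} (h : Tendsto x atTop (nhds a)) :
    Tendsto (fun k => qf A (x k)) atTop (nhds (qf A a)) :=
  ((continuous_qf A).tendsto a).comp h

/-- Every cluster point of the iterates is a KKT solution: the subgradient inequalities pass to
the limit. The proximal terms `⟨P (y⁺ - y), w - y⁺⟩` and `⟨Q (z⁺ - z), w - z⁺⟩` vanish by
Cauchy–Schwarz, so no control of `y⁺ - y` or `z⁺ - z` themselves is needed. -/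
lemma IsIADMM.cluster_isKKT (h : IsIADMM B C b f g γ βlow Q β P y z lam)
    (hs : IsKKT B C b f g ys zs ls) (hf : Continuous f) (hg : Continuous g)
    {φ : ℕ → ℕ} (hφ : StrictMono φ) {y₀ : Fin n₁ → ℝ} {z₀ : Fin n₂ → ℝ} {l₀ : Fin m → ℝ}
    (hy : Tendsto (fun j => y (φ j + 1)) atTop (nhds y₀))
    (hz : Tendsto (fun j => z (φ j + 1)) atTop (nhds z₀))
    (hl : Tendsto (fun j => lam (φ j + 1)) atTop (nhds l₀)) :
    IsKKT B C b f g y₀ z₀ l₀ := by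
  obtain ⟨-, -, hR, hX, hS, hU⟩ := h.increments_tendsto hs
  obtain ⟨βi, hβ⟩ := h.beta_tendsto
  have hφt := hφ.tendsto_atTop
  replace hR := hR.comp hφt
  replace hX := hX.comp hφt
  replace hS := hS.comp hφt
  replace hU := hU.comp hφt
  replace hβ := hβ.comp hφt
  simp only [Function.comp_def] at hR hX hS hU hβ
  -- the multiplier before the step has the same limit as the one after it
  have hl' : Tendsto (fun j => lam (φ j)) atTop (nhds l₀) := by
    have := hl.sub ((hβ.const_mul γ).smul hR)
    simp only [smul_zero, sub_zero] at this
    refine this.congr fun j => ?_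
    rw [h.step_lam (φ j)]
    abel
  refine ⟨fun w => ?_, fun w => ?_, ?_⟩
  · have hv : Tendsto (fun j => w - y (φ j + 1)) atTop (nhds (w - y₀)) := hy.const_sub w
    have hBv := tendsto_mulVec B hv
    have hP : Tendsto (fun j => (y (φ j + 1) - y (φ j)) ⬝ᵥ P (φ j) *ᵥ (w - y (φ j + 1)))
        atTop (nhds 0) := by
      apply tendsto_zero_of_sq
      have hlim := ((hU.mul ((tendsto_qf (P 0) hv).const_mul (β 0))).const_mul (βlow ^ 2)⁻¹)
      simp only [zero_mul, mul_zero] at hlim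
      refine squeeze_zero (fun j => sq_nonneg _) (fun j => ?_) hlim
      rw [inv_mul_eq_div, le_div_iff₀ (pow_pos h.low_pos 2)]
      have h1 := posSemidef_cauchy_schwarz (h.P_psd (φ j)) (y (φ j + 1) - y (φ j))
        (w - y (φ j + 1))
      have h2 := h.beta_qf_le (φ j) (w - y (φ j + 1))
      have h3 := qf_nonneg (h.P_psd (φ j)) (y (φ j + 1) - y (φ j))
      have hb := h.beta_pos (φ j)
      have h4 := pow_le_pow_left₀ h.low_pos.le (h.low_le (φ j)) 2
      calc _ ≤ ((y (φ j + 1) - y (φ j)) ⬝ᵥ P (φ j) *ᵥ (w - y (φ j + 1))) ^ 2 * β (φ j) ^ 2 :=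
            mul_le_mul_of_nonneg_left h4 (sq_nonneg _)
        _ ≤ (qf (P (φ j)) (y (φ j + 1) - y (φ j)) * qf (P (φ j)) (w - y (φ j + 1)))
              * β (φ j) ^ 2 := mul_le_mul_of_nonneg_right h1 (sq_nonneg _)
        _ = (β (φ j) * qf (P (φ j)) (y (φ j + 1) - y (φ j)))
              * (β (φ j) * qf (P (φ j)) (w - y (φ j + 1))) := by ring
        _ ≤ _ := mul_le_mul_of_nonneg_left h2 (mul_nonneg hb.le h3)
    have hlim := ((hf.tendsto y₀).comp hy).add
      (((tendsto_dot hl' hBv).add (hβ.mul (tendsto_dot (hR.sub hX) hBv))).add hP).neg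
    simp only [sub_zero, zero_dotProduct, mul_zero, add_zero] at hlim
    rw [neg_dotProduct, transpose_mulVec_dot]
    refine le_of_tendsto hlim (Eventually.of_forall fun j => ?_)
    have hj := h.step_y (φ j) w
    have e : B *ᵥ y (φ j + 1) + C *ᵥ z (φ j) - b
        = B *ᵥ y (φ j + 1) + C *ᵥ z (φ j + 1) - b - C *ᵥ (z (φ j + 1) - z (φ j)) := by
      rw [mulVec_sub]; abel
    rw [neg_dotProduct, add_dotProduct, add_dotProduct, smul_dotProduct, transpose_mulVec_dot,
      transpose_mulVec_dot, e, dotProduct_comm (P (φ j) *ᵥ _), posSemidef_symm (h.P_psd (φ j)),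
      smul_eq_mul] at hj
    exact hj
  · have hv : Tendsto (fun j => w - z (φ j + 1)) atTop (nhds (w - z₀)) := hz.const_sub w
    have hCv := tendsto_mulVec C hv
    have hQ : Tendsto (fun j => (z (φ j + 1) - z (φ j)) ⬝ᵥ Q *ᵥ (w - z (φ j + 1)))
        atTop (nhds 0) := by
      apply tendsto_zero_of_sq
      have hlim := hS.mul (tendsto_qf Q hv)
      rw [zero_mul] at hlim
      exact squeeze_zero (fun j => sq_nonneg _)
        (fun j => posSemidef_cauchy_schwarz h.Q_psd _ _) hlim
    have hlim := ((hg.tendsto z₀).comp hz).add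
      (((tendsto_dot hl' hCv).add (hβ.mul (tendsto_dot hR hCv))).add (hβ.mul hQ)).neg
    simp only [zero_dotProduct, mul_zero, add_zero] at hlim
    rw [neg_dotProduct, transpose_mulVec_dot]
    refine le_of_tendsto hlim (Eventually.of_forall fun j => ?_)
    have hj := h.step_z (φ j) w
    rw [neg_dotProduct, add_dotProduct, add_dotProduct, smul_dotProduct, smul_dotProduct,
      transpose_mulVec_dot, transpose_mulVec_dot, dotProduct_comm (Q *ᵥ _),
      posSemidef_symm h.Q_psd, smul_eq_mul, smul_eq_mul] at hj
    exact hj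
  · have := ((tendsto_mulVec B hy).add (tendsto_mulVec C hz)).sub_const b
    exact sub_eq_zero.mp (tendsto_nhds_unique this hR)

/-- If the iterates cluster at a KKT point, the Lyapunov function relative to that point vanishes
in the limit, being monotone and vanishing along the subsequence. -/
lemma IsIADMM.lyap_tendsto_zero (h : IsIADMM B C b f g γ βlow Q β P y z lam)
    (hs : IsKKT B C b f g ys zs ls) {φ : ℕ → ℕ} (hφ : StrictMono φ)
    (hy : Tendsto (fun j => y (φ j + 1)) atTop (nhds ys))
    (hz : Tendsto (fun j => z (φ j + 1)) atTop (nhds zs))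
    (hl : Tendsto (fun j => lam (φ j + 1)) atTop (nhds ls)) :
    Tendsto (lyap B C b γ Q β P y z lam ys zs ls) atTop (nhds 0) := by
  obtain ⟨hanti, hnn, hR, -, hS, -⟩ := h.increments_tendsto hs
  obtain ⟨βi, hβ⟩ := h.beta_tendsto
  have hφt := hφ.tendsto_atTop
  have hlim := tendsto_atTop_ciInf hanti ⟨0, by rintro _ ⟨k, rfl⟩; exact hnn k⟩
  replace hR := hR.comp hφt
  replace hS := hS.comp hφt
  have hβ' := (hβ.comp (tendsto_add_atTop_nat 1)).comp hφt
  replace hβ := hβ.comp hφt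
  simp only [Function.comp_def] at hR hS hβ hβ'
  have hu : Tendsto (fun j => y (φ j + 1) - ys) atTop (nhds 0) := by
    simpa using hy.sub_const ys
  have hv : Tendsto (fun j => z (φ j + 1) - zs) atTop (nhds 0) := by
    simpa using hz.sub_const zs
  have hw : Tendsto (fun j => lam (φ j + 1) - ls) atTop (nhds 0) := by
    simpa using hl.sub_const ls
  have hPu : Tendsto (fun j => β (φ j + 1) * qf (P (φ j + 1)) (y (φ j + 1) - ys))
      atTop (nhds 0) := by
    have h0 := (tendsto_qf (P 0) hu).const_mul (β 0)
    simp only [qf, zero_dotProduct, mul_zero] at h0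
    exact squeeze_zero
      (fun j => mul_nonneg (h.beta_pos _).le (qf_nonneg (h.P_psd _) _))
      (fun j => h.beta_qf_le _ _) h0
  have hCv := tendsto_mulVec C hv
  have htot := ((((tendsto_dot hw hw).const_mul γ⁻¹).add
      ((hβ'.pow 2).mul ((tendsto_dot hCv hCv).add (tendsto_qf Q hv)))).add hPu).add
      (((hβ.pow 2).mul (tendsto_dot hR hR)).const_mul (kap γ)) |>.add ((hβ.pow 2).mul hS)
  have e0 : qf Q (0 : Fin n₂ → ℝ) = 0 := by simp [qf]
  simp only [zero_dotProduct, mulVec_zero, mul_zero, add_zero, e0] at htot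
  have := tendsto_nhds_unique (hlim.comp hφt) htot
  rwa [this] at hlim

/-- The iteration converges to a KKT solution. -/
lemma IsIADMM.converges (h : IsIADMM B C b f g γ βlow Q β P y z lam)
    (hs : IsKKT B C b f g ys zs ls) (hf : Continuous f) (hg : Continuous g)
    (hCQ : (Cᵀ * C + Q).PosDef) {Θ : Matrix (Fin n₁) (Fin n₁) ℝ} (hΘpd : Θ.PosDef)
    (hΘ : ∀ k, (β k • P k + β k ^ 2 • (Bᵀ * B) - Θ).PosSemidef) :
    ∃ y₀ z₀ l₀, IsKKT B C b f g y₀ z₀ l₀ ∧ Tendsto y atTop (nhds y₀) ∧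
      Tendsto z atTop (nhds z₀) ∧ Tendsto lam atTop (nhds l₀) := by
  have hγ : 0 < γ := one_pos.trans h.one_lt
  have hlow := pow_pos h.low_pos 2
  obtain ⟨hanti, -, hR, -, -, -⟩ := h.increments_tendsto hs
  have hRR := tendsto_dot hR hR
  rw [zero_dotProduct] at hRR
  have hb := h.iterate_bounds hs hΘ
  have hL : ∀ k, lyap B C b γ Q β P y z lam ys zs ls k ≤ lyap B C b γ Q β P y z lam ys zs ls 0 :=
    fun k => hanti (Nat.zero_le k)
  obtain ⟨Kr, hKr⟩ := hRR.bddAbove_range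
  have hKr' := fun k => hKr ⟨k, rfl⟩
  obtain ⟨R1, hR1⟩ := bounded_of_posDef hΘpd (x := fun k => y (k + 1) - ys)
    (K := lyap B C b γ Q β P y z lam ys zs ls 0 + β 0 ^ 2 * (2 * Kr
        + 2 * ((βlow ^ 2)⁻¹ * lyap B C b γ Q β P y z lam ys zs ls 0))) fun k => by
      refine (hb k).2.2.trans ?_
      have := hL k
      have := hKr' k
      simp only at this
      gcongr
  obtain ⟨R2, hR2⟩ := bounded_of_posDef hCQ (x := fun k => z (k + 1) - zs)
    (K := (βlow ^ 2)⁻¹ * lyap B C b γ Q β P y z lam ys zs ls 0) fun k => by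
      refine (hb k).2.1.trans ?_
      have := hL k
      gcongr
  obtain ⟨R3, hR3⟩ := bounded_of_posDef (Matrix.PosDef.one (R := ℝ))
    (x := fun k => lam (k + 1) - ls)
    (K := γ * lyap B C b γ Q β P y z lam ys zs ls 0) fun k => by
      simp only [qf, one_mulVec]
      refine (hb k).1.trans ?_
      have := hL k
      gcongr
  obtain ⟨⟨y₀, z₀, l₀⟩, -, φ, hφ, hlim⟩ := tendsto_subseq_of_bounded
    (s := Metric.closedBall ys R1 ×ˢ Metric.closedBall zs R2 ×ˢ Metric.closedBall ls R3)
    (Metric.isBounded_closedBall.prod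
      (Metric.isBounded_closedBall.prod Metric.isBounded_closedBall))
    (x := fun k => (y (k + 1), z (k + 1), lam (k + 1)))
    (fun k => by
      simp only [Set.mem_prod, mem_closedBall_iff_norm]
      exact ⟨hR1 k, hR2 k, hR3 k⟩)
  have hy := hlim.fst_nhds
  have hz := hlim.snd_nhds.fst_nhds
  have hl := hlim.snd_nhds.snd_nhds
  have hs' := h.cluster_isKKT hs hf hg hφ hy hz hl
  have hL0 := h.lyap_tendsto_zero hs' hφ hy hz hl
  have hb' := h.iterate_bounds hs' hΘ
  refine ⟨y₀, z₀, l₀, hs', ?_, ?_, ?_⟩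
  · rw [← tendsto_add_atTop_iff_nat 1, ← tendsto_sub_nhds_zero_iff]
    refine tendsto_zero_of_posDef hΘpd (squeeze_zero (fun k => ?_) (fun k => (hb' k).2.2) ?_)
    · exact qf_nonneg hΘpd.posSemidef _
    · simpa using hL0.add (((hRR.const_mul 2).add
        ((hL0.const_mul (βlow ^ 2)⁻¹).const_mul 2)).const_mul (β 0 ^ 2))
  · rw [← tendsto_add_atTop_iff_nat 1, ← tendsto_sub_nhds_zero_iff]
    refine tendsto_zero_of_posDef hCQ (squeeze_zero (fun k => ?_) (fun k => (hb' k).2.1) ?_)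
    · exact qf_nonneg hCQ.posSemidef _
    · simpa using hL0.const_mul (βlow ^ 2)⁻¹
  · rw [← tendsto_add_atTop_iff_nat 1, ← tendsto_sub_nhds_zero_iff]
    refine tendsto_zero_of_dot_self (squeeze_zero (fun k => dot_self_nonneg _)
      (fun k => (hb' k).1) ?_)
    simpa using hL0.const_mul γ

end descent

/-- Remark after Theorem 3.5: iterate convergence of IADMM when `σ_g = 0`
(`f` and `g` merely convex), the penalty parameters are nonincreasing and
bounded below, and `CᵀC + Q ≻ 0`. -/
theorem iadmm_iterate_convergence_no_strong_convexity
    {m n₁ n₂ : ℕ}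
    (B : Matrix (Fin m) (Fin n₁) ℝ) (C : Matrix (Fin m) (Fin n₂) ℝ) (b : Fin m → ℝ)
    (f : (Fin n₁ → ℝ) → ℝ) (g : (Fin n₂ → ℝ) → ℝ)
    (γ βlow τ : ℝ)
    (hγ : 1 < γ ∧ γ < (1 + Real.sqrt 5) / 2)
    (hβlow : 0 < βlow ∧ βlow < 1) (hτ : 0 < τ ∧ τ < 1)
    (hf : ConvexOn ℝ Set.univ f) (hgconv : ConvexOn ℝ Set.univ g)
    (Q : Matrix (Fin n₂) (Fin n₂) ℝ) (hQ : Q.PosSemidef)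
    (hCQ : (Cᵀ * C + Q).PosDef)
    (β : ℕ → ℝ) (hβpos : ∀ k, 1 ≤ k → 0 < β k) (hβ1 : βlow ≤ β 1)
    (P : ℕ → Matrix (Fin n₁) (Fin n₁) ℝ) (hP : ∀ k, 1 ≤ k → (P k).PosSemidef)
    (hPmono : ∀ k, 1 ≤ k → (β k • P k - β (k + 1) • P (k + 1)).PosSemidef)
    (hβlo : ∀ k, 1 ≤ k → max βlow (τ * β k) ≤ β (k + 1))
    (hβhi : ∀ k, 1 ≤ k → β (k + 1) ≤ β k)
    (y : ℕ → Fin n₁ → ℝ) (z : ℕ → Fin n₂ → ℝ) (lam : ℕ → Fin m → ℝ)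
    (hiter₁ : ∀ k, 1 ≤ k → IsSubgradient f
        (-(Bᵀ *ᵥ lam k + β k • (Bᵀ *ᵥ (B *ᵥ y (k + 1) + C *ᵥ z k - b))
            + P k *ᵥ (y (k + 1) - y k))) (y (k + 1)))
    (hiter₂ : ∀ k, 1 ≤ k → IsSubgradient g
        (-(Cᵀ *ᵥ lam k + β k • (Cᵀ *ᵥ (B *ᵥ y (k + 1) + C *ᵥ z (k + 1) - b))
            + β k • (Q *ᵥ (z (k + 1) - z k)))) (z (k + 1)))
    (hiter₃ : ∀ k, 1 ≤ k →
      lam (k + 1) = lam k + (γ * β k) • (B *ᵥ y (k + 1) + C *ᵥ z (k + 1) - b))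
    -- a KKT solution of problem (P) exists
    (ystar : Fin n₁ → ℝ) (zstar : Fin n₂ → ℝ) (lamstar : Fin m → ℝ)
    (hKKT₁ : IsSubgradient f (-(Bᵀ *ᵥ lamstar)) ystar)
    (hKKT₂ : IsSubgradient g (-(Cᵀ *ᵥ lamstar)) zstar)
    (hKKT₃ : B *ᵥ ystar + C *ᵥ zstar = b)
    -- uniform positive definiteness: β_k P_k + β_k² BᵀB ⪰ Θ ≻ 0
    (Θ : Matrix (Fin n₁) (Fin n₁) ℝ) (hΘ : Θ.PosDef)
    (hΘle : ∀ k, 1 ≤ k → (β k • P k + β k ^ 2 • (Bᵀ * B) - Θ).PosSemidef) :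
    ∃ (ys : Fin n₁ → ℝ) (zs : Fin n₂ → ℝ) (ls : Fin m → ℝ),
      IsSubgradient f (-(Bᵀ *ᵥ ls)) ys ∧
      IsSubgradient g (-(Cᵀ *ᵥ ls)) zs ∧
      B *ᵥ ys + C *ᵥ zs = b ∧
      Tendsto y atTop (nhds ys) ∧
      Tendsto z atTop (nhds zs) ∧
      Tendsto lam atTop (nhds ls) := by
  have hsq : γ ^ 2 < 1 + γ := by
    have h5 : Real.sqrt 5 ^ 2 = 5 := Real.sq_sqrt (by norm_num)
    nlinarith [hγ.1, hγ.2, Real.sqrt_nonneg 5]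
  have hlow : ∀ k, βlow ≤ β (k + 1) := fun k => by
    cases k with
    | zero => exact hβ1
    | succ k => exact (le_max_left _ _).trans (hβlo (k + 1) (by omega))
  have h : IsIADMM B C b f g γ βlow Q (fun k => β (k + 1)) (fun k => P (k + 1))
      (fun k => y (k + 1)) (fun k => z (k + 1)) (fun k => lam (k + 1)) :=
    { one_lt := hγ.1
      delta_pos := by linarith
      low_pos := hβlow.1
      Q_psd := hQ
      low_le := hlow
      anti := fun k => hβhi (k + 1) (by omega)
      P_psd := fun k => hP (k + 1) (by omega)
      P_anti := fun k => hPmono (k + 1) (by omega)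
      step_y := fun k => hiter₁ (k + 1) (by omega)
      step_z := fun k => hiter₂ (k + 1) (by omega)
      step_lam := fun k => hiter₃ (k + 1) (by omega) }
  obtain ⟨y₀, z₀, l₀, hs, hy, hz, hl⟩ := h.converges ⟨hKKT₁, hKKT₂, hKKT₃⟩
    (continuous_of_convexOn_univ hf) (continuous_of_convexOn_univ hgconv) hCQ hΘ
    (fun k => hΘle (k + 1) (by omega))
  exact ⟨y₀, z₀, l₀, hs.sub_y, hs.sub_z, hs.feas, (tendsto_add_atTop_iff_nat 1).mp hy,
    (tendsto_add_atTop_iff_nat 1).mp hz, (tendsto_add_atTop_iff_nat 1).mp hl⟩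
end
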